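/- Let α ∈ (0,1), let G be sampled from the Erdős–Rényi distribution G(n, α/n), and let u ≠ v be two fixed vertices in [n]. Then the probability that G contains a path from u to v (i.e., that u and v lie in the same connected component of G) is at most α / ((1−α)·n). -/

import Mathlib

open Finset

/-- The set of potential edges of a graph on vertex set `Fin n`: all non-diagonal
unordered pairs. -/
noncomputable def potentialEdges (n : ℕ) : Finset (Sym2 (Fin n)) :=
  univ.filter (fun e => ¬ e.IsDiag)

/-- The probability that an Erdős–Rényi graph `G(n, p)` (each potential edge included
independently with probability `p`) has edge set exactly `S`. -/
noncomputable def erWeight (n : ℕ) (p : ℝ) (S : Finset (Sym2 (Fin n))) : ℝ :=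
  p ^ S.card * (1 - p) ^ ((potentialEdges n).card - S.card)

/-!
A path of length `q + 1` from `u` to `v` is determined by its `q` inner vertices, so the complete
graph has at most `n ^ q` of them, and each lies in `G(n, p)` with probability `p ^ (q + 1)` because
its edges are distinct. For `p = α / n`, the union bound over all paths gives
`∑ q, n ^ q * (α / n) ^ (q + 1) = (α / n) * ∑ q, α ^ q ≤ (α / n) / (1 - α)`.
-/

theorem sum_Icc_pow_card_mul_pow_card_sub {ι R : Type*} [DecidableEq ι] [CommSemiring R]
    {T E : Finset ι} (hTE : T ⊆ E) (a b : R) :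
    ∑ S ∈ Icc T E, a ^ #S * b ^ (#E - #S) = a ^ #T * (a + b) ^ (#E - #T) := by
  have union_injOn : Set.InjOn (T ∪ ·) ((E \ T).powerset : Set (Finset ι)) := by
    intro S hS S' hS' h
    have hd := disjoint_of_subset_left (mem_powerset.1 hS) sdiff_disjoint
    have hd' := disjoint_of_subset_left (mem_powerset.1 hS') sdiff_disjoint
    rw [← union_sdiff_cancel_left hd.symm, ← union_sdiff_cancel_left hd'.symm]
    exact congrArg (· \ T) h
  rw [Icc_eq_image_powerset hTE, sum_image union_injOn, ← card_sdiff_of_subset hTE,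
    ← sum_pow_mul_eq_add_pow, mul_sum]
  refine sum_congr rfl fun S hS => ?_
  have hd : Disjoint T S := (disjoint_of_subset_left (mem_powerset.1 hS) sdiff_disjoint).symm
  rw [card_union_of_disjoint hd, card_sdiff_of_subset hTE, pow_add, mul_assoc, Nat.sub_sub]

theorem card_finsetWalkLength_succ_le_maxDegree_pow {V : Type*} [Fintype V] [DecidableEq V]
    (G : SimpleGraph V) [DecidableRel G.Adj] (q : ℕ) (u v : V) :
    #(G.finsetWalkLength (q + 1) u v) ≤ G.maxDegree ^ q := by
  induction q generalizing u with
  | zero =>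
    have card_eq := G.adjMatrix_pow_apply_eq_card_walk (α := ℕ) 1 u v
    rw [pow_one, G.card_set_walk_length_eq, SimpleGraph.adjMatrix_apply, Nat.cast_id] at card_eq
    rw [zero_add, pow_zero, ← card_eq]
    split_ifs <;> simp
  | succ q ih =>
    calc #(G.finsetWalkLength (q + 2) u v)
        ≤ ∑ w : G.neighborSet u, #(G.finsetWalkLength (q + 1) w v) := by
          rw [SimpleGraph.finsetWalkLength]
          exact card_biUnion_le.trans_eq (sum_congr rfl fun w _ => card_map _)
      _ ≤ ∑ _w : G.neighborSet u, G.maxDegree ^ q := sum_le_sum fun w _ => ih w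
      _ = G.degree u * G.maxDegree ^ q := by
          rw [sum_const, card_univ, G.card_neighborSet_eq_degree, smul_eq_mul]
      _ ≤ G.maxDegree ^ (q + 1) := by
          rw [pow_succ']
          gcongr
          exact G.degree_le_maxDegree u

theorem mem_potentialEdges {n : ℕ} {e : Sym2 (Fin n)} : e ∈ potentialEdges n ↔ ¬ e.IsDiag := by
  simp [potentialEdges]

theorem erWeight_nonneg {n : ℕ} {p : ℝ} (hp₀ : 0 ≤ p) (hp₁ : p ≤ 1) (S : Finset (Sym2 (Fin n))) :
    0 ≤ erWeight n p S :=
  mul_nonneg (pow_nonneg hp₀ _) (pow_nonneg (sub_nonneg.2 hp₁) _)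

open Classical in
/-- The probability that the edge set of an Erdős–Rényi graph `G(n, p)` satisfies `A`. Events are
predicates on finite sets of unordered pairs, of which only the subsets of `potentialEdges n`
matter. -/
noncomputable def erProb (n : ℕ) (p : ℝ) (A : Finset (Sym2 (Fin n)) → Prop) : ℝ :=
  ∑ S ∈ (potentialEdges n).powerset with A S, erWeight n p S

section erProb

variable {n : ℕ} {p : ℝ}

theorem erProb_superset {T : Finset (Sym2 (Fin n))} (hT : T ⊆ potentialEdges n) (p : ℝ) :
    erProb n p (T ⊆ ·) = p ^ #T := by
  classical
  have filter_eq : {S ∈ (potentialEdges n).powerset | T ⊆ S} = Icc T (potentialEdges n) := by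
    ext S
    simp [and_comm]
  have sum_eq := sum_Icc_pow_card_mul_pow_card_sub hT p (1 - p)
  rw [add_sub_cancel, one_pow, mul_one, ← filter_eq] at sum_eq
  rw [← sum_eq, erProb]
  congr!

theorem erProb_le_sum (hp₀ : 0 ≤ p) (hp₁ : p ≤ 1) {ι : Type*} {s : Finset ι}
    {A : Finset (Sym2 (Fin n)) → Prop} {B : ι → Finset (Sym2 (Fin n)) → Prop}
    (hAB : ∀ S, A S → ∃ i ∈ s, B i S) :
    erProb n p A ≤ ∑ i ∈ s, erProb n p (B i) := by
  classical
  have indicator_nonneg (i S) : 0 ≤ if B i S then erWeight n p S else 0 := by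
    split_ifs
    exacts [erWeight_nonneg hp₀ hp₁ S, le_rfl]
  simp only [erProb, sum_filter]
  rw [sum_comm]
  refine sum_le_sum fun S _ => ?_
  split_ifs with hA
  · obtain ⟨i, hi, hB⟩ := hAB S hA
    calc erWeight n p S = if B i S then erWeight n p S else 0 := (if_pos hB).symm
      _ ≤ _ := single_le_sum (fun i _ => indicator_nonneg i S) hi
  · exact sum_nonneg fun i _ => indicator_nonneg i S

theorem erProb_exists_isPath_length_eq_le (hp₀ : 0 ≤ p) (hp₁ : p ≤ 1) (k : ℕ) (u v : Fin n) :
    erProb n p (fun S => ∃ w : (SimpleGraph.fromEdgeSet (S : Set (Sym2 (Fin n)))).Walk u v,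
        w.IsPath ∧ w.length = k)
      ≤ #((⊤ : SimpleGraph (Fin n)).finsetWalkLength k u v) * p ^ k := by
  classical
  let paths : Finset ((⊤ : SimpleGraph (Fin n)).Walk u v) :=
    {w ∈ (⊤ : SimpleGraph (Fin n)).finsetWalkLength k u v | w.IsPath}
  have prob_path (w) (hw : w ∈ paths) : erProb n p (w.edges.toFinset ⊆ ·) = p ^ k := by
    obtain ⟨hlength, hpath⟩ := mem_filter.1 hw
    have edges_subset : w.edges.toFinset ⊆ potentialEdges n := fun e he =>
      mem_potentialEdges.2 <| SimpleGraph.not_isDiag_of_mem_edgeSet _ <|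
        w.edges_subset_edgeSet (List.mem_toFinset.1 he)
    rw [erProb_superset edges_subset, List.toFinset_card_of_nodup hpath.isTrail.edges_nodup,
      w.length_edges, SimpleGraph.mem_finsetWalkLength_iff.1 hlength]
  calc _ ≤ ∑ w ∈ paths, erProb n p (w.edges.toFinset ⊆ ·) := by
        refine erProb_le_sum hp₀ hp₁ fun S ⟨w, hpath, hlength⟩ => ⟨w.mapLe le_top, ?_, ?_⟩
        · exact mem_filter.2 ⟨by simpa [SimpleGraph.mem_finsetWalkLength_iff], hpath.mapLe _⟩
        · intro e he
          rw [List.mem_toFinset, SimpleGraph.Walk.edges_mapLe_eq_edges] at he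
          have mem_edgeSet := w.edges_subset_edgeSet he
          rw [SimpleGraph.edgeSet_fromEdgeSet] at mem_edgeSet
          exact mem_coe.1 mem_edgeSet.1
    _ = #paths * p ^ k := by rw [sum_congr rfl prob_path, sum_const, nsmul_eq_mul]
    _ ≤ _ := by
        gcongr
        exact filter_subset _ _

theorem erProb_reachable_le_sum (hp₀ : 0 ≤ p) (hp₁ : p ≤ 1) {u v : Fin n} (huv : u ≠ v) :
    erProb n p (fun S => (SimpleGraph.fromEdgeSet (S : Set (Sym2 (Fin n)))).Reachable u v)
      ≤ ∑ q ∈ range n, (n : ℝ) ^ q * p ^ (q + 1) := by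
  have card_walks_le (q : ℕ) : #((⊤ : SimpleGraph (Fin n)).finsetWalkLength (q + 1) u v) ≤ n ^ q :=
    (card_finsetWalkLength_succ_le_maxDegree_pow _ q u v).trans (Nat.pow_le_pow_left (by simp) q)
  refine (erProb_le_sum hp₀ hp₁ fun S hS => ?_).trans (sum_le_sum fun q _ =>
    (erProb_exists_isPath_length_eq_le hp₀ hp₁ (q + 1) u v).trans ?_)
  · obtain ⟨w, hpath⟩ := hS.exists_isPath
    have length_lt : w.length < n := by simpa using hpath.length_lt
    have length_ne_zero : w.length ≠ 0 := fun h => huv (w.eq_of_length_eq_zero h)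
    exact ⟨w.length - 1, mem_range.2 (by lia), w, hpath, by lia⟩
  · gcongr
    exact_mod_cast card_walks_le q

end erProb

open Classical in
/-- for `α ∈ (0,1)`, `G ∼ G(n, α/n)`, and fixed distinct vertices `u ≠ v`,
the probability that `G` contains a path from `u` to `v` (i.e. `u` and `v` lie in the same
connected component, i.e. `v` is reachable from `u`) is at most `α/((1−α)·n)`. -/
theorem stmt13 (n : ℕ) (α : ℝ) (hα0 : 0 < α) (hα1 : α < 1)
    (u v : Fin n) (huv : u ≠ v) :
    ∑ S ∈ (potentialEdges n).powerset,
        (if (SimpleGraph.fromEdgeSet (S : Set (Sym2 (Fin n)))).Reachable u v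
          then erWeight n (α / n) S else 0)
      ≤ α / ((1 - α) * n) := by
  have one_le_n : (1 : ℝ) ≤ n := by exact_mod_cast u.pos
  have p_le_one : α / n ≤ 1 := div_le_one_of_le₀ (by linarith) (by linarith)
  calc _ = erProb n (α / n) fun S =>
          (SimpleGraph.fromEdgeSet (S : Set (Sym2 (Fin n)))).Reachable u v := by
        rw [erProb, sum_filter]
        congr!
    _ ≤ ∑ q ∈ range n, (n : ℝ) ^ q * (α / n) ^ (q + 1) :=
        erProb_reachable_le_sum (by positivity) p_le_one huv
    _ = α / n * ∑ q ∈ range n, α ^ q := by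
        rw [mul_sum]
        refine sum_congr rfl fun q _ => ?_
        rw [pow_succ, ← mul_assoc, ← mul_pow, mul_div_cancel₀ _ (by linarith), mul_comm]
    _ ≤ α / n * (1 / (1 - α)) := by
        gcongr
        simpa using geom_sum_Ico_le_of_lt_one (m := 0) (n := n) hα0.le hα1
    _ = α / ((1 - α) * n) := by rw [div_mul_div_comm, mul_one, mul_comm (n : ℝ)]
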